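/- Let V be a real inner product space with dim V = n ≥ 2, let p ∈ V be nonzero, set t = ‖p‖²/2, and let a₁, b₁, a₂, b₂, c₁, d₁, c₂, d₂ ∈ ℝ with a₁·a₂ = 1 and (a₁ + 2t·b₁)·(a₂ + 2t·b₂) = 1. Define J : V × V → V × V by J(X,P) = (−(a₂·P + b₂·⟨p,P⟩·p), a₁·X + b₁·⟨p,X⟩·p) and the bilinear form G on V × V by G((X₁,P₁),(X₂,P₂)) = c₁·⟨X₁,X₂⟩ + d₁·⟨p,X₁⟩·⟨p,X₂⟩ + c₂·⟨P₁,P₂⟩ + d₂·⟨p,P₁⟩·⟨p,P₂⟩. Then G(Jx, Jy) = G(x, y) for all x, y ∈ V × V if and only if there exist real numbers λ and μ such that c₁ = λ·a₁, c₂ = λ·a₂, c₁ + 2t·d₁ = (λ + 2t·μ)·(a₁ + 2t·b₁) and c₂ + 2t·d₂ = (λ + 2t·μ)·(a₂ + 2t·b₂). -/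

import Mathlib

open RealInnerProductSpace

/-!
Write `D a b = a • 1 + b • p ⊗ p`. Then `J (X, P) = (-D a₂ b₂ P, D a₁ b₁ X)`, and `G` is the inner
product twisted by `D c₁ d₁` on the first factor and by `D c₂ d₂` on the second. As the operators
`D a b` are symmetric, `G` is Hermitian iff `D a₁ b₁ * D c₂ d₂ * D a₁ b₁ = D c₁ d₁` and
`D a₂ b₂ * D c₁ d₁ * D a₂ b₂ = D c₂ d₂`. The operators `D a b` commute and are closed under
composition, and `D a₁ b₁`, `D a₂ b₂` are mutually inverse, so this says that
`D c₁ d₁ = D λ μ * D a₁ b₁` and `D c₂ d₂ = D λ μ * D a₂ b₂` for some `λ` and `μ`. In dimension at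
least two these operator equations can be read off on the eigenspaces `pᗮ` and `ℝ p`, where `D a b`
acts by `a` and `a + ‖p‖² b`; this gives the proportionality relations.
-/

section RCLike

variable {𝕜 V : Type*} [RCLike 𝕜] [NormedAddCommGroup V] [InnerProductSpace 𝕜 V]

/-- The endomorphism `(X, P) ↦ (-A₂ P, A₁ X)` of `V × V`; it is a complex structure when `A₁` and
`A₂` are mutually inverse. -/
def twistedStructure (A₁ A₂ : Module.End 𝕜 V) : Module.End 𝕜 (V × V) :=
  (-(A₂ ∘ₗ LinearMap.snd 𝕜 V V)).prod (A₁ ∘ₗ LinearMap.fst 𝕜 V V)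

/-- The sesquilinear form on `V × V` for which the factors are orthogonal and carry the inner
product twisted by `C₁` and by `C₂`. No symmetry or positivity is built in. -/
def twistedForm (C₁ C₂ : Module.End 𝕜 V) (x y : V × V) : 𝕜 :=
  inner 𝕜 (C₁ x.1) y.1 + inner 𝕜 (C₂ x.2) y.2

lemma twistedStructure_apply (A₁ A₂ : Module.End 𝕜 V) (X P : V) :
    twistedStructure A₁ A₂ (X, P) = (-A₂ P, A₁ X) := rfl

lemma twistedForm_twistedStructure {A₁ A₂ : Module.End 𝕜 V} (hA₁ : A₁.IsSymmetric)
    (hA₂ : A₂.IsSymmetric) (C₁ C₂ : Module.End 𝕜 V) (x y : V × V) :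
    twistedForm C₁ C₂ (twistedStructure A₁ A₂ x) (twistedStructure A₁ A₂ y) =
      twistedForm (A₁ * C₂ * A₁) (A₂ * C₁ * A₂) x y := by
  simp [twistedForm, twistedStructure, hA₁ _ y.1, hA₂ _ y.2, add_comm]

lemma twistedForm_inj {C₁ C₂ C₁' C₂' : Module.End 𝕜 V} :
    (∀ x y, twistedForm C₁ C₂ x y = twistedForm C₁' C₂' x y) ↔ C₁ = C₁' ∧ C₂ = C₂' := by
  refine ⟨fun h ↦ ⟨?_, ?_⟩, ?_⟩
  · ext X
    exact ext_inner_right 𝕜 fun Y ↦ by simpa [twistedForm] using h (X, 0) (Y, 0)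
  · ext P
    exact ext_inner_right 𝕜 fun Q ↦ by simpa [twistedForm] using h (0, P) (0, Q)
  · rintro ⟨rfl, rfl⟩ x y
    rfl

lemma twistedForm_hermitian_iff {A₁ A₂ : Module.End 𝕜 V} (hA₁ : A₁.IsSymmetric)
    (hA₂ : A₂.IsSymmetric) {C₁ C₂ : Module.End 𝕜 V} :
    (∀ x y, twistedForm C₁ C₂ (twistedStructure A₁ A₂ x) (twistedStructure A₁ A₂ y) =
      twistedForm C₁ C₂ x y) ↔ A₁ * C₂ * A₁ = C₁ ∧ A₂ * C₁ * A₂ = C₂ := by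
  simp only [twistedForm_twistedStructure hA₁ hA₂, twistedForm_inj]

lemma exists_ne_zero_inner_eq_zero (hV : 1 < Module.rank 𝕜 V) (p : V) :
    ∃ q : V, q ≠ 0 ∧ inner 𝕜 p q = 0 := by
  have hne : (𝕜 ∙ p)ᗮ ≠ ⊥ := by
    intro h
    have htop : (𝕜 ∙ p) = ⊤ := Submodule.orthogonal_eq_bot_iff.mp h
    have hle : Module.rank 𝕜 (𝕜 ∙ p) ≤ 1 := by
      simpa using rank_span_le (R := 𝕜) ({p} : Set V)
    rw [htop, rank_top] at hle
    exact hV.not_ge hle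
  obtain ⟨q, hq, hq0⟩ := Submodule.exists_mem_ne_zero_of_ne_bot hne
  exact ⟨q, hq0, Submodule.mem_orthogonal_singleton_iff_inner_right.mp hq⟩

end RCLike

section NaturalEnd

variable {V : Type*} [NormedAddCommGroup V] [InnerProductSpace ℝ V]

/-- The operator `a • 1 + b • p ⊗ p`, where `(p ⊗ p) X = ⟪p, X⟫ • p`: the form common to the blocks
of the structures and metrics of natural diagonal type. -/
noncomputable def naturalEnd (p : V) (a b : ℝ) : Module.End ℝ V :=
  a • 1 + b • (innerₛₗ ℝ p).smulRight p

variable (p : V)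

lemma naturalEnd_apply (a b : ℝ) (X : V) : naturalEnd p a b X = a • X + (b * ⟪p, X⟫) • p := by
  simp [naturalEnd, mul_smul]

lemma naturalEnd_apply_self (a b : ℝ) : naturalEnd p a b p = (a + ‖p‖ ^ 2 * b) • p := by
  rw [naturalEnd_apply, real_inner_self_eq_norm_sq, add_smul, mul_comm b]

lemma naturalEnd_apply_of_inner_eq_zero {p q : V} (hq : ⟪p, q⟫ = 0) (a b : ℝ) :
    naturalEnd p a b q = a • q := by
  simp [naturalEnd_apply, hq]

lemma inner_naturalEnd_left (a b : ℝ) (X Y : V) :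
    ⟪naturalEnd p a b X, Y⟫ = a * ⟪X, Y⟫ + b * ⟪p, X⟫ * ⟪p, Y⟫ := by
  rw [naturalEnd_apply, inner_add_left, real_inner_smul_left, real_inner_smul_left]

lemma isSymmetric_naturalEnd (a b : ℝ) : (naturalEnd p a b).IsSymmetric := fun X Y ↦ by
  rw [← real_inner_comm X, inner_naturalEnd_left, inner_naturalEnd_left, real_inner_comm X Y]
  ring

lemma naturalEnd_one_zero : naturalEnd p 1 0 = 1 := by
  simp [naturalEnd]

lemma naturalEnd_mul (a b a' b' : ℝ) :
    naturalEnd p a b * naturalEnd p a' b' =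
      naturalEnd p (a * a') (a * b' + b * a' + ‖p‖ ^ 2 * (b * b')) := by
  ext X
  simp only [Module.End.mul_apply, naturalEnd_apply, inner_add_right, real_inner_smul_right,
    real_inner_self_eq_norm_sq]
  module

lemma commute_naturalEnd (a b a' b' : ℝ) :
    Commute (naturalEnd p a b) (naturalEnd p a' b') := by
  rw [commute_iff_eq, naturalEnd_mul, naturalEnd_mul]
  congr 1 <;> ring

variable {p} {a b a' b' a'' b'' : ℝ}

lemma naturalEnd_congr (h : a = a') (h' : a + ‖p‖ ^ 2 * b = a' + ‖p‖ ^ 2 * b') :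
    naturalEnd p a b = naturalEnd p a' b' := by
  subst h
  rcases eq_or_ne p 0 with rfl | hp
  · simp [naturalEnd]
  · rw [mul_left_cancel₀ (pow_ne_zero 2 (norm_ne_zero_iff.mpr hp)) (add_left_cancel h')]

lemma naturalEnd_mul_eq_one (h : a * a' = 1)
    (h' : (a + ‖p‖ ^ 2 * b) * (a' + ‖p‖ ^ 2 * b') = 1) :
    naturalEnd p a b * naturalEnd p a' b' = 1 := by
  rw [naturalEnd_mul, ← naturalEnd_one_zero p]
  exact naturalEnd_congr h (by linear_combination h')

lemma naturalEnd_eq_iff (hV : 1 < Module.rank ℝ V) :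
    naturalEnd p a b = naturalEnd p a' b' ↔
      a = a' ∧ a + ‖p‖ ^ 2 * b = a' + ‖p‖ ^ 2 * b' := by
  refine ⟨fun h ↦ ?_, fun ⟨h, h'⟩ ↦ naturalEnd_congr h h'⟩
  obtain ⟨q, hq0, hpq⟩ := exists_ne_zero_inner_eq_zero hV p
  have ha : a = a' := smul_left_injective ℝ hq0 <| by
    simpa only [naturalEnd_apply_of_inner_eq_zero hpq] using LinearMap.congr_fun h q
  refine ⟨ha, ?_⟩
  rcases eq_or_ne p 0 with rfl | hp
  · simpa using ha
  · exact smul_left_injective ℝ hp <| by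
      simpa only [naturalEnd_apply_self] using LinearMap.congr_fun h p

lemma naturalEnd_eq_mul_iff (hV : 1 < Module.rank ℝ V) :
    naturalEnd p a b = naturalEnd p a' b' * naturalEnd p a'' b'' ↔
      a = a' * a'' ∧ a + ‖p‖ ^ 2 * b = (a' + ‖p‖ ^ 2 * b') * (a'' + ‖p‖ ^ 2 * b'') := by
  rw [naturalEnd_mul, naturalEnd_eq_iff hV]
  ring_nf

lemma naturalEnd_conj_eq_iff_exists_eq_mul {a₁ b₁ a₂ b₂ c₁ d₁ c₂ d₂ : ℝ}
    (h : naturalEnd p a₁ b₁ * naturalEnd p a₂ b₂ = 1) :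
    (naturalEnd p a₁ b₁ * naturalEnd p c₂ d₂ * naturalEnd p a₁ b₁ = naturalEnd p c₁ d₁ ∧
      naturalEnd p a₂ b₂ * naturalEnd p c₁ d₁ * naturalEnd p a₂ b₂ = naturalEnd p c₂ d₂) ↔
    ∃ l m : ℝ, naturalEnd p c₁ d₁ = naturalEnd p l m * naturalEnd p a₁ b₁ ∧
      naturalEnd p c₂ d₂ = naturalEnd p l m * naturalEnd p a₂ b₂ := by
  have h' : naturalEnd p a₂ b₂ * naturalEnd p a₁ b₁ = 1 :=
    (commute_naturalEnd p a₂ b₂ a₁ b₁).eq.trans h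
  constructor
  · rintro ⟨-, h₂⟩
    refine ⟨c₁ * a₂, c₁ * b₂ + d₁ * a₂ + ‖p‖ ^ 2 * (d₁ * b₂), ?_⟩
    rw [← naturalEnd_mul, mul_assoc, h', mul_one, (commute_naturalEnd p c₁ d₁ a₂ b₂).eq]
    exact ⟨rfl, h₂.symm⟩
  · rintro ⟨l, m, h₁, h₂⟩
    constructor
    · rw [h₁, h₂, mul_assoc, mul_assoc, h', mul_one, (commute_naturalEnd p a₁ b₁ l m).eq]
    · rw [h₁, h₂, mul_assoc, mul_assoc, h, mul_one, (commute_naturalEnd p a₂ b₂ l m).eq]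

end NaturalEnd

theorem hermitian_iff_proportionality_general {V : Type*} [NormedAddCommGroup V]
    [InnerProductSpace ℝ V] (hV : 1 < Module.rank ℝ V)
    (p : V) (t : ℝ) (ht : t = ‖p‖ ^ 2 / 2)
    (a₁ b₁ a₂ b₂ c₁ d₁ c₂ d₂ : ℝ)
    (h1 : a₁ * a₂ = 1) (h2 : (a₁ + 2 * t * b₁) * (a₂ + 2 * t * b₂) = 1)
    (J : V × V → V × V)
    (hJ : ∀ X P : V,
      J (X, P) = (-(a₂ • P + (b₂ * ⟪p, P⟫) • p), a₁ • X + (b₁ * ⟪p, X⟫) • p))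
    (G : V × V → V × V → ℝ)
    (hG : ∀ X₁ P₁ X₂ P₂ : V, G (X₁, P₁) (X₂, P₂) =
      c₁ * ⟪X₁, X₂⟫ + d₁ * ⟪p, X₁⟫ * ⟪p, X₂⟫ +
      c₂ * ⟪P₁, P₂⟫ + d₂ * ⟪p, P₁⟫ * ⟪p, P₂⟫) :
    (∀ x y : V × V, G (J x) (J y) = G x y) ↔
      ∃ lam μ : ℝ, c₁ = lam * a₁ ∧ c₂ = lam * a₂ ∧
        c₁ + 2 * t * d₁ = (lam + 2 * t * μ) * (a₁ + 2 * t * b₁) ∧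
        c₂ + 2 * t * d₂ = (lam + 2 * t * μ) * (a₂ + 2 * t * b₂) := by
  have hs : 2 * t = ‖p‖ ^ 2 := by rw [ht]; ring
  rw [hs] at h2 ⊢
  have hJ_eq (x : V × V) :
      J x = twistedStructure (naturalEnd p a₁ b₁) (naturalEnd p a₂ b₂) x := by
    obtain ⟨X, P⟩ := x
    rw [hJ, twistedStructure_apply, naturalEnd_apply, naturalEnd_apply]
  have hG_eq (x y : V × V) :
      G x y = twistedForm (naturalEnd p c₁ d₁) (naturalEnd p c₂ d₂) x y := by
    rw [hG, twistedForm, inner_naturalEnd_left, inner_naturalEnd_left, add_assoc _ (c₂ * _)]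
  simp only [hJ_eq, hG_eq]
  rw [twistedForm_hermitian_iff (isSymmetric_naturalEnd p a₁ b₁) (isSymmetric_naturalEnd p a₂ b₂),
    naturalEnd_conj_eq_iff_exists_eq_mul (naturalEnd_mul_eq_one h1 h2)]
  simp only [naturalEnd_eq_mul_iff hV, and_assoc, and_left_comm]

/-- Theorem 5 (pointwise): the natural diagonal metric `G` is Hermitian with respect to
the natural diagonal almost complex structure `J` iff the proportionality relations
(18) and (19) hold for some parameters `λ` and `μ`. -/
theorem hermitian_iff_proportionality {V : Type*} [NormedAddCommGroup V]
    [InnerProductSpace ℝ V]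
    (n : ℕ) (hn : 2 ≤ n) (hdim : Module.finrank ℝ V = n)
    (p : V) (hp : p ≠ 0) (t : ℝ) (ht : t = ‖p‖ ^ 2 / 2)
    (a₁ b₁ a₂ b₂ c₁ d₁ c₂ d₂ : ℝ)
    (h1 : a₁ * a₂ = 1) (h2 : (a₁ + 2 * t * b₁) * (a₂ + 2 * t * b₂) = 1)
    (J : V × V → V × V)
    (hJ : ∀ X P : V,
      J (X, P) = (-(a₂ • P + (b₂ * ⟪p, P⟫) • p), a₁ • X + (b₁ * ⟪p, X⟫) • p))
    (G : V × V → V × V → ℝ)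
    (hG : ∀ X₁ P₁ X₂ P₂ : V, G (X₁, P₁) (X₂, P₂) =
      c₁ * ⟪X₁, X₂⟫ + d₁ * ⟪p, X₁⟫ * ⟪p, X₂⟫ +
      c₂ * ⟪P₁, P₂⟫ + d₂ * ⟪p, P₁⟫ * ⟪p, P₂⟫) :
    (∀ x y : V × V, G (J x) (J y) = G x y) ↔
      ∃ lam μ : ℝ, c₁ = lam * a₁ ∧ c₂ = lam * a₂ ∧
        c₁ + 2 * t * d₁ = (lam + 2 * t * μ) * (a₁ + 2 * t * b₁) ∧
        c₂ + 2 * t * d₂ = (lam + 2 * t * μ) * (a₂ + 2 * t * b₂) := by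
  exact hermitian_iff_proportionality_general
    (by exact_mod_cast Module.lt_rank_of_lt_finrank (hn.trans_eq hdim.symm))
    p t ht a₁ b₁ a₂ b₂ c₁ d₁ c₂ d₂ h1 h2 J hJ G hG
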